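/- arXiv:2101.06753 — 5 statements merged into one kernel-verified Lean document; each statement's English description precedes it below -/
import Mathlib

section
/- Let F be a field, q ∈ F with q ≠ 0, let m ≥ 1 and k ≥ 0 be integers, and let a_1 < a_2 < ... < a_m be a strictly increasing sequence of integers. Define the m×m matrix M(k;a) with (i,j)-entry q^{-i·a_j} · (q^{i-a_j}; q)_{2m+k-2i} for 1 ≤ i,j ≤ m. Then det M(k;a) = q^{m(m-1)(2m+k-1)/2 - Σ_{l=1}^m a_l(2m-l)} · (∏_{j=1}^m (q^{m-a_j}; q)_k) · ∏_{1 ≤ i < j ≤ m} (1 - q^{a_i - a_j})(1 - q^{-2m-k+1+a_i+a_j}). -/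
/-!
Write `x = q^{-a_j}` and `N = 2m + k - 1`. The factors of `(q^i x; q)_{2m+k-2i}` are
`1 - x q^l` for `i ≤ l ≤ N - i`. Those with `m ≤ l < m + k` form `(q^m x; q)_k`, which does not
depend on `i`; the others are paired as `l ↔ N - l`, and
`(1 - x q^l) (1 - x q^{N-l}) = x (y - (q^l + q^{N-l}))` with `y = x⁻¹ + x q^N`.
Hence the `(i,j)` entry is `x_j^m (q^m x_j; q)_k` times a monic polynomial of degree `m - i`
evaluated at `y_j` (`entry_eq`, `pairPoly`), and the determinant reduces to the Vandermonde
product `∏_{i<j} (y_i - y_j)` (`det_rev_eval`). Finally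
`y_i - y_j = q^{N - a_i} (1 - q^{a_i - a_j}) (1 - q^{a_i + a_j - N})` (`node_sub`).
-/

/-- The q-Pochhammer symbol `(x; q)_n = ∏_{l=0}^{n-1} (1 - x q^l)`. -/
def qPoch {F : Type*} [Field F] (x q : F) (n : ℕ) : F :=
  ∏ l ∈ Finset.range n, (1 - x * q ^ l)

open Polynomial

/-- Splitting off the central `k` factors of a symmetric range of Pochhammer factors and pairing
the remaining ones from the inside outwards. -/
lemma qPoch_symm {F : Type*} [Field F] (q : F) (hq : q ≠ 0) (z : F) (k n : ℕ) :
    qPoch (z * q ^ (-(n : ℤ))) q (2 * n + k) = qPoch z q k *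
      ∏ t ∈ Finset.range n, (1 - z * q ^ (-(t : ℤ) - 1)) * (1 - z * q ^ ((k : ℤ) + t)) := by
  induction n with
  | zero => simp
  | succ n ih =>
    rw [Finset.prod_range_succ, ← mul_assoc, ← ih]
    unfold qPoch
    rw [show 2 * (n + 1) + k = (2 * n + k + 1) + 1 by ring, Finset.prod_range_succ',
      Finset.prod_range_succ]
    have h1 : ∀ l : ℕ, z * q ^ (-((n + 1 : ℕ) : ℤ)) * q ^ (l + 1)
        = z * q ^ (-(n : ℤ)) * q ^ l := by
      intro l
      rw [← zpow_natCast, ← zpow_natCast, mul_assoc, mul_assoc, ← zpow_add₀ hq, ← zpow_add₀ hq]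
      congr 2
      push_cast
      ring
    have h2 : z * q ^ (-(n : ℤ)) * q ^ (2 * n + k) = z * q ^ ((k : ℤ) + n) := by
      rw [← zpow_natCast, mul_assoc, ← zpow_add₀ hq]
      congr 2
      push_cast
      ring
    have h3 : (-((n + 1 : ℕ) : ℤ)) = -(n : ℤ) - 1 := by push_cast; ring
    simp only [h1, h2]
    rw [h3, pow_zero, mul_one]
    ring

/-- The monic polynomial of degree `n` whose roots are `q^l + q^{N-l}` for `m - n ≤ l < m`,
where `N = 2m + k - 1`; the roots are indexed by `t = m - 1 - l`. -/
noncomputable def pairPoly {F : Type*} [Field F] (q : F) (m k n : ℕ) : F[X] :=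
  ∏ t ∈ Finset.range n, (X - C (q ^ ((m : ℤ) - 1 - t) + q ^ ((m : ℤ) + k + t)))

lemma pairPoly_monic {F : Type*} [Field F] (q : F) (m k n : ℕ) : (pairPoly q m k n).Monic :=
  monic_prod_of_monic _ _ fun _ _ => monic_X_sub_C _

lemma pairPoly_natDegree {F : Type*} [Field F] (q : F) (m k n : ℕ) :
    (pairPoly q m k n).natDegree = n := by
  unfold pairPoly
  rw [natDegree_prod_of_monic _ _ fun _ _ => monic_X_sub_C _]
  simp only [natDegree_X_sub_C, Finset.sum_const, Finset.card_range, smul_eq_mul, mul_one]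

/-- The Vandermonde node `y = x⁻¹ + x q^N` for `x = q^{-a}` and `N = 2m + k - 1`. -/
def node {F : Type*} [Field F] (q : F) (m k : ℕ) (a : ℤ) : F :=
  q ^ a + q ^ (2 * (m : ℤ) + k - 1 - a)

lemma node_sub {F : Type*} [Field F] (q : F) (hq : q ≠ 0) (m k : ℕ) (a b : ℤ) :
    node q m k a - node q m k b = q ^ (2 * (m : ℤ) + k - 1 - a) *
      ((1 - q ^ (a - b)) * (1 - q ^ (-(2 * (m : ℤ)) - k + 1 + a + b))) := by
  unfold node
  have e1 : q ^ (2 * (m : ℤ) + k - 1 - a) * q ^ (a - b) = q ^ (2 * (m : ℤ) + k - 1 - b) := by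
    rw [← zpow_add₀ hq]; congr 1; ring
  have e2 : q ^ (2 * (m : ℤ) + k - 1 - a) * q ^ (-(2 * (m : ℤ)) - k + 1 + a + b) = q ^ b := by
    rw [← zpow_add₀ hq]; congr 1; ring
  have e3 : q ^ (2 * (m : ℤ) + k - 1 - b) * q ^ (-(2 * (m : ℤ)) - k + 1 + a + b) = q ^ a := by
    rw [← zpow_add₀ hq]; congr 1; ring
  linear_combination (1 - q ^ (-(2 * (m : ℤ)) - k + 1 + a + b)) * e1 + e2 - e3

/-- The matrix entry in the row whose distance from the last row is `n`. -/
lemma entry_eq {F : Type*} [Field F] (q : F) (hq : q ≠ 0) (m k n : ℕ) (a : ℤ) :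
    q ^ (-((m : ℤ) - n) * a) * qPoch (q ^ (((m : ℤ) - n) - a)) q (2 * n + k)
      = (q ^ (-(m : ℤ) * a) * qPoch (q ^ ((m : ℤ) - a)) q k)
        * (pairPoly q m k n).eval (node q m k a) := by
  have h0 : q ^ (((m : ℤ) - n) - a) = q ^ ((m : ℤ) - a) * q ^ (-(n : ℤ)) := by
    rw [← zpow_add₀ hq]; congr 1; ring
  have hfac : ∀ t : ℕ, (1 - q ^ ((m : ℤ) - a) * q ^ (-(t : ℤ) - 1)) *
      (1 - q ^ ((m : ℤ) - a) * q ^ ((k : ℤ) + t))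
      = q ^ (-a) * (node q m k a - (q ^ ((m : ℤ) - 1 - t) + q ^ ((m : ℤ) + k + t))) := by
    intro t
    unfold node
    have e1 : q ^ ((m : ℤ) - a) * q ^ (-(t : ℤ) - 1) = q ^ (-a) * q ^ ((m : ℤ) - 1 - t) := by
      rw [← zpow_add₀ hq, ← zpow_add₀ hq]; congr 1; ring
    have e2 : q ^ ((m : ℤ) - a) * q ^ ((k : ℤ) + t) = q ^ (-a) * q ^ ((m : ℤ) + k + t) := by
      rw [← zpow_add₀ hq, ← zpow_add₀ hq]; congr 1; ring
    have e3 : q ^ (-a) * q ^ a = 1 := by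
      rw [← zpow_add₀ hq]; simp
    have e4 : q ^ (-a) * q ^ (2 * (m : ℤ) + k - 1 - a)
        = q ^ (-a) * q ^ ((m : ℤ) - 1 - t) * (q ^ (-a) * q ^ ((m : ℤ) + k + t)) := by
      simp only [← zpow_add₀ hq]; congr 1; ring
    rw [e1, e2]
    linear_combination -e3 - e4
  have hpow : q ^ (-((m : ℤ) - n) * a) * (q ^ (-a)) ^ n = q ^ (-(m : ℤ) * a) := by
    rw [← zpow_natCast, ← zpow_mul, ← zpow_add₀ hq]; congr 1; ring
  rw [h0, qPoch_symm q hq, Finset.prod_congr rfl fun t _ => hfac t, Finset.prod_mul_distrib,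
    Finset.prod_const, Finset.card_range, ← hpow]
  unfold pairPoly
  rw [eval_prod]
  simp only [eval_sub, eval_X, eval_C]
  ring

/-- Vandermonde evaluation for monic polynomials listed by decreasing degree. -/
lemma det_rev_eval {F : Type*} [Field F] (m : ℕ) (y : Fin m → F) (p : ℕ → F[X])
    (hd : ∀ n, (p n).natDegree = n) (hp : ∀ n, (p n).Monic) :
    Matrix.det (Matrix.of fun i j : Fin m => (p (i.rev : ℕ)).eval (y j))
      = ∏ i : Fin m, ∏ j ∈ Finset.Ioi i, (y i - y j) := by
  have h := Matrix.det_eval_matrixOfPolynomials_eq_det_vandermonde (fun i : Fin m => y i.rev)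
    (fun i : Fin m => p i) (fun i => hd i) (fun i => hp i)
  rw [Matrix.det_vandermonde] at h
  rw [← Matrix.det_transpose, ← Matrix.det_submatrix_equiv_self (Fin.revPerm (n := m))]
  have hM : ((Matrix.of fun i j : Fin m => (p (i.rev : ℕ)).eval (y j)).transpose.submatrix
      Fin.revPerm Fin.revPerm) = Matrix.of fun i j : Fin m => (p (j : ℕ)).eval (y i.rev) := by
    ext i j
    simp only [Matrix.submatrix_apply, Matrix.transpose_apply, Matrix.of_apply,
      Fin.revPerm_apply, Fin.rev_rev]
  rw [hM, ← h, ← Equiv.prod_comp (Fin.revPerm (n := m))]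
  have hin : ∀ i : Fin m, ∏ j ∈ Finset.Ioi (Fin.revPerm i), (y j.rev - y (Fin.revPerm i).rev)
      = ∏ j ∈ Finset.Iio i, (y j - y i) := by
    intro i
    refine Finset.prod_nbij' Fin.rev Fin.rev ?_ ?_ ?_ ?_ ?_
    · intro j hj
      simpa [Fin.rev_lt_iff] using hj
    · intro j hj
      simpa [Fin.rev_lt_rev] using hj
    all_goals simp
  rw [Finset.prod_congr rfl fun i _ => hin i]
  exact Finset.prod_comm' (by simp)

/-- Proposition 1 of the paper: the determinant of the matrix
`M(k; a)` with `(i,j)`-entry `q^{-i a_j} (q^{i-a_j}; q)_{2m+k-2i}` (for `1 ≤ i,j ≤ m`)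
factors completely. -/
theorem det_qPoch_matrix {F : Type*} [Field F] (q : F) (hq : q ≠ 0)
    (m : ℕ) (hm : 1 ≤ m) (k : ℕ) (a : Fin m → ℤ) (ha : StrictMono a) :
    Matrix.det (Matrix.of fun i j : Fin m =>
        q ^ (-((i : ℤ) + 1) * a j) *
          qPoch (q ^ (((i : ℤ) + 1) - a j)) q (2 * m + k - 2 * ((i : ℕ) + 1)))
      = q ^ (((m * (m - 1) * (2 * m + k - 1) / 2 : ℕ) : ℤ)
              - ∑ l : Fin m, a l * (2 * (m : ℤ) - ((l : ℕ) + 1)))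
        * (∏ j : Fin m, qPoch (q ^ ((m : ℤ) - a j)) q k)
        * ∏ i : Fin m, ∏ j ∈ Finset.Ioi i,
            (1 - q ^ (a i - a j)) * (1 - q ^ (-(2 * (m : ℤ)) - k + 1 + a i + a j)) := by
  have hM : (Matrix.of fun i j : Fin m => q ^ (-((i : ℤ) + 1) * a j) *
        qPoch (q ^ (((i : ℤ) + 1) - a j)) q (2 * m + k - 2 * ((i : ℕ) + 1)))
      = Matrix.of fun i j : Fin m => (q ^ (-(m : ℤ) * a j) * qPoch (q ^ ((m : ℤ) - a j)) q k) *
        (Matrix.of fun i j : Fin m =>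
          (pairPoly q m k (i.rev : ℕ)).eval (node q m k (a j))) i j := by
    ext i j
    simp only [Matrix.of_apply]
    rw [← entry_eq q hq]
    have hi := i.isLt
    have h1 : ((i : ℤ) + 1) = (m : ℤ) - ((i.rev : ℕ) : ℤ) := by
      rw [Fin.val_rev]; omega
    have h2 : 2 * m + k - 2 * ((i : ℕ) + 1) = 2 * (i.rev : ℕ) + k := by
      rw [Fin.val_rev]; omega
    rw [h1, h2]
  rw [hM, Matrix.det_mul_row, det_rev_eval m _ (pairPoly q m k) (pairPoly_natDegree q m k)
    (pairPoly_monic q m k)]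
  simp only [node_sub q hq, Finset.prod_mul_distrib, Finset.prod_const, Fin.card_Ioi]
  have hprod : ∀ f : Fin m → ℤ, ∏ i, q ^ f i = q ^ ∑ i, f i := by
    intro f
    induction (Finset.univ : Finset (Fin m)) using Finset.cons_induction with
    | empty => simp
    | cons i s hi ih => rw [Finset.prod_cons, Finset.sum_cons, zpow_add₀ hq, ih]
  -- The node factors contribute `N - a i` once for each of the `m - 1 - i` indices above `i`.
  have hexp : ((m * (m - 1) * (2 * m + k - 1) / 2 : ℕ) : ℤ)
        - ∑ l : Fin m, a l * (2 * (m : ℤ) - ((l : ℕ) + 1))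
      = ∑ i : Fin m, -(m : ℤ) * a i
        + ∑ i : Fin m, (2 * (m : ℤ) + k - 1 - a i) * ((m - 1 - (i : ℕ) : ℕ) : ℤ) := by
    have hs : ∑ i : Fin m, (m - 1 - (i : ℕ)) = m * (m - 1) / 2 := by
      rw [Fin.sum_univ_eq_sum_range (fun i => m - 1 - i) m,
        Finset.sum_range_reflect (fun i => i) m, Finset.sum_range_id]
    have hdiv : m * (m - 1) * (2 * m + k - 1) / 2
        = (∑ i : Fin m, (m - 1 - (i : ℕ))) * (2 * m + k - 1) := by
      rw [hs, Nat.div_mul_right_comm (Nat.even_mul_pred_self m).two_dvd]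
    rw [hdiv, Finset.sum_mul, Nat.cast_sum, ← Finset.sum_sub_distrib, ← Finset.sum_add_distrib]
    refine Finset.sum_congr rfl fun i _ => ?_
    have hi := i.isLt
    have c1 : ((m - 1 - (i : ℕ) : ℕ) : ℤ) = (m : ℤ) - 1 - (i : ℕ) := by omega
    have c2 : ((2 * m + k - 1 : ℕ) : ℤ) = 2 * (m : ℤ) + k - 1 := by omega
    rw [Nat.cast_mul, c1, c2]
    ring
  rw [hexp, zpow_add₀ hq, ← hprod, ← hprod]
  simp only [zpow_mul, zpow_natCast]
  ring
end

section
/- Let F be a field, let m ≥ 1 be an integer, let X_1, ..., X_m be nonzero elements of F, let A_2, ..., A_m ∈ F, and let C ∈ F. Then det_{1 ≤ i,j ≤ m} ( ∏_{l=j+1}^{m} (C/X_i + A_l)(X_i + A_l) ) = (∏_{i=2}^{m} A_i^{i-1}) · ∏_{1 ≤ i < j ≤ m} (X_i - X_j)(1 - C/(X_i X_j)). Here the (i,j)-entry of the matrix is the product over l from j+1 to m (an empty product, equal to 1, when j = m). -/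
/-!
With `Y i = X i + C / X i`, each factor is affine in `Y i`:
`(C / X i + A l) * (X i + A l) = A l * Y i + (A l ^ 2 + C)`. So column `j` consists of the values at
the `Y i` of a polynomial of degree at most `m - 1 - j`, whose coefficient in that degree is
`∏ l > j, A l`. After reversing rows and columns the matrix is a Vandermonde matrix in the `Y i`
times an upper triangular coefficient matrix. The theorem follows from
`Y i - Y j = (X i - X j) * (1 - C / (X i * X j))` and `∏ j, ∏ l > j, A l = ∏ l, A l ^ l`.
-/

open Polynomial in
/-- Generalizes `Matrix.det_eval_matrixOfPolynomials_eq_det_vandermonde` to polynomials that need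
not be monic. -/
lemma det_eval_of_natDegree_le {R : Type*} [CommRing R] {n : ℕ} (v : Fin n → R)
    (p : Fin n → R[X]) (hp : ∀ i, (p i).natDegree ≤ i) :
    (Matrix.of fun i j => (p j).eval (v i)).det
      = (Matrix.vandermonde v).det * ∏ j, (p j).coeff j := by
  rw [Matrix.eval_matrixOfPolynomials_eq_vandermonde_mul_matrixOfPolynomials v p hp,
    Matrix.det_mul, Matrix.det_of_isUpperTriangular (M := Matrix.of fun i j => (p j).coeff i)]
  · rfl
  · intro i j hij
    exact coeff_eq_zero_of_natDegree_lt (lt_of_le_of_lt (hp j) hij)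

open Polynomial in
/-- The determinant with affine factors `a l * Y i + b l`; the columns have decreasing degree, which
turns the Vandermonde factors into `Y i - Y j` for `i < j`. -/
lemma det_prod_affine {R : Type*} [CommRing R] {m : ℕ} (Y a b : Fin m → R) :
    (Matrix.of fun i j : Fin m => ∏ l ∈ Finset.Ioi j, (a l * Y i + b l)).det
      = (∏ i : Fin m, a i ^ (i : ℕ)) * ∏ i : Fin m, ∏ j ∈ Finset.Ioi i, (Y i - Y j) := by
  let p : Fin m → R[X] := fun j => ∏ l ∈ Finset.Ioi j.rev, (C (a l) * X + C (b l))
  have hcard (j : Fin m) : (Finset.Ioi j.rev).card = j := by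
    rw [Fin.card_Ioi, Fin.val_rev]; omega
  have hp (j : Fin m) : (p j).natDegree ≤ j := by
    refine (natDegree_prod_le _ _).trans ((Finset.sum_le_card_nsmul _ _ 1 ?_).trans ?_)
    · intro l _
      exact natDegree_linear_le
    · simp [hcard]
  have hc (j : Fin m) : (p j).coeff j = ∏ l ∈ Finset.Ioi j.rev, a l := by
    have := coeff_prod_of_natDegree_le (s := Finset.Ioi j.rev)
      (fun l => C (a l) * X + C (b l)) 1 (fun l _ => natDegree_linear_le)
    rw [hcard, mul_one] at this
    simpa [p] using this
  have hA : ∏ j : Fin m, ∏ l ∈ Finset.Ioi j.rev, a l = ∏ i : Fin m, a i ^ (i : ℕ) := by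
    refine (Equiv.prod_comp Fin.revPerm (fun j : Fin m => ∏ l ∈ Finset.Ioi j, a l)).trans ?_
    rw [Finset.prod_comm' (t' := Finset.univ) (s' := fun l => Finset.Iio l) (by simp)]
    simp
  have hV : ∏ i : Fin m, ∏ j ∈ Finset.Ioi i, (Y j.rev - Y i.rev)
      = ∏ i : Fin m, ∏ j ∈ Finset.Ioi i, (Y i - Y j) := by
    rw [Finset.prod_comm' (t' := Finset.univ) (s' := fun l => Finset.Iio l) (by simp),
      ← Equiv.prod_comp Fin.revPerm (fun i : Fin m => ∏ j ∈ Finset.Ioi i, (Y i - Y j))]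
    refine Finset.prod_congr rfl fun i _ => ?_
    refine Finset.prod_bij (fun j _ => j.rev) ?_ ?_ ?_ ?_
    · simp
    · simp
    · intro j hj
      exact ⟨j.rev, by simpa [Fin.rev_lt_iff] using hj, by simp⟩
    · simp
  rw [← Matrix.det_submatrix_equiv_self Fin.revPerm]
  have h := det_eval_of_natDegree_le (fun i : Fin m => Y i.rev) p hp
  rw [Matrix.det_vandermonde, hV, Finset.prod_congr rfl (fun j _ => hc j), hA, mul_comm] at h
  rw [← h]
  congr 1
  ext i j
  simp [p, eval_prod]



/-- Krattenthaler's determinant lemma (Lemma 4 of "Advanced Determinant Calculus"),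
stated over a field.  Indices are shifted: `X i` is the mathematical `X_{i+1}`, and
`A l` is the mathematical `A_{l+1}` (so `A 0`, the mathematical `A_1`, does not occur:
on the right-hand side it appears only with exponent `0`). -/
theorem krattenthaler_det {F : Type*} [Field F] (m : ℕ) (hm : 1 ≤ m)
    (X A : Fin m → F) (C : F) (hX : ∀ i, X i ≠ 0) :
    Matrix.det (Matrix.of fun i j : Fin m =>
        ∏ l ∈ Finset.Ioi j, ((C / X i + A l) * (X i + A l)))
      = (∏ i : Fin m, A i ^ (i : ℕ))
        * ∏ i : Fin m, ∏ j ∈ Finset.Ioi i, (X i - X j) * (1 - C / (X i * X j)) := by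
  have hY (i j : Fin m) : (X i - X j) * (1 - C / (X i * X j))
      = (X i + C / X i) - (X j + C / X j) := by
    have := hX i
    have := hX j
    field_simp
    ring
  have hf (i l : Fin m) : (C / X i + A l) * (X i + A l)
      = A l * (X i + C / X i) + (A l ^ 2 + C) := by
    have := hX i
    field_simp
    ring
  simp only [hY, hf]
  exact det_prod_affine (fun i => X i + C / X i) A (fun l => A l ^ 2 + C)
end

section
/- Let R be a commutative ring, let n ≥ 2, and let M be an n×n matrix over R. Write M with rows and columns indexed by 1, ..., n, and for index sets I, J let M_{∖I|∖J} denote the submatrix of M obtained by deleting the rows in I and the columns in J. Then det(M) · det(M_{∖{1,n}|∖{1,n}}) = det(M_{∖{1}|∖{1}}) · det(M_{∖{n}|∖{n}}) − det(M_{∖{1}|∖{n}}) · det(M_{∖{n}|∖{1}}), where by convention the determinant of a 0×0 matrix equals 1. -/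
/-!
The formula is the `2 × 2` case of Jacobi's identity on minors of the adjugate.
Write `N` in blocks, the first of size `2 × 2`, and let `B` be the identity matrix with its first
block column replaced by that of `adjugate N`. Since `N * adjugate N = det N • 1`, the product
`N * B` is block upper triangular with diagonal blocks `det N • 1` and `N₂₂`. Taking determinants,
`det N * det (adjugate N)₁₁ = det N ^ 2 * det N₂₂`. The factor `det N` cancels for the matrix of
indeterminates over `ℤ`, and specialization gives the identity over every commutative ring.
Dodgson's formula follows by letting the first block consist of the first and the last index:
the entries of `(adjugate N)₁₁` are then the four corner minors up to sign.
-/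

/-- Jacobi's identity for `2 × 2` minors of the adjugate, before cancelling `det N`. -/
theorem det_mul_det_adjugate_block {R m : Type*} [CommRing R] [Fintype m] [DecidableEq m]
    (N : Matrix (Fin 2 ⊕ m) (Fin 2 ⊕ m) R) :
    N.det * N.adjugate.toBlocks₁₁.det = N.det * (N.det * N.toBlocks₂₂.det) := by
  have hmul := N.mul_adjugate
  rw [← Matrix.fromBlocks_toBlocks N.adjugate] at hmul
  nth_rewrite 1 [← Matrix.fromBlocks_toBlocks N] at hmul
  rw [Matrix.fromBlocks_multiply, ← Matrix.fromBlocks_one, Matrix.fromBlocks_smul,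
    Matrix.fromBlocks_inj] at hmul
  obtain ⟨h₁₁, -, h₂₁, -⟩ := hmul
  have hB : N * Matrix.fromBlocks N.adjugate.toBlocks₁₁ 0 N.adjugate.toBlocks₂₁ 1 =
      Matrix.fromBlocks (N.det • 1) N.toBlocks₁₂ 0 N.toBlocks₂₂ := by
    nth_rewrite 1 [← Matrix.fromBlocks_toBlocks N]
    rw [Matrix.fromBlocks_multiply, h₁₁, h₂₁]
    simp
  have hdet := congrArg Matrix.det hB
  rw [Matrix.det_mul, Matrix.det_fromBlocks_zero₁₂, Matrix.det_fromBlocks_zero₂₁] at hdet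
  simp only [Matrix.det_one, mul_one, Matrix.det_smul, Fintype.card_fin] at hdet
  rw [hdet]
  ring

theorem det_adjugate_block {R m : Type*} [CommRing R] [Fintype m] [DecidableEq m]
    (N : Matrix (Fin 2 ⊕ m) (Fin 2 ⊕ m) R) :
    N.adjugate.toBlocks₁₁.det = N.det * N.toBlocks₂₂.det := by
  let X := Matrix.mvPolynomialX (Fin 2 ⊕ m) (Fin 2 ⊕ m) ℤ
  have hX : X.adjugate.toBlocks₁₁.det = X.det * X.toBlocks₂₂.det :=
    mul_left_cancel₀ (Matrix.det_mvPolynomialX_ne_zero (Fin 2 ⊕ m) ℤ)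
      (det_mul_det_adjugate_block X)
  let f : MvPolynomial ((Fin 2 ⊕ m) × (Fin 2 ⊕ m)) ℤ →+* R :=
    MvPolynomial.eval₂Hom (Int.castRingHom R) fun p => N p.1 p.2
  have hf : f.mapMatrix X = N := by
    ext i j
    simp [f, X]
  have h := congrArg f hX
  have h₁₁ : f.mapMatrix X.adjugate.toBlocks₁₁ = (f.mapMatrix X.adjugate).toBlocks₁₁ := rfl
  have h₂₂ : f.mapMatrix X.toBlocks₂₂ = (f.mapMatrix X).toBlocks₂₂ := rfl
  rwa [map_mul, RingHom.map_det, RingHom.map_det, RingHom.map_det, h₁₁, h₂₂,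
    RingHom.map_adjugate, hf] at h

/-- Every index is exactly one of: first, last, interior. -/
theorem bijective_ends_interior (n : ℕ) :
    Function.Bijective (Sum.elim ![0, Fin.last (n + 1)] fun i : Fin n => i.succ.castSucc) := by
  rw [Fintype.bijective_iff_injective_and_card]
  refine ⟨?_, by simp [Nat.add_comm 2 n]⟩
  rintro (i | i) (j | j) h
  · fin_cases i <;> fin_cases j <;> simp_all [Fin.ext_iff]
  · fin_cases i <;> simp [Fin.ext_iff] at h
    omega
  · fin_cases j <;> simp [Fin.ext_iff] at h
    omega
  · simpa [Fin.ext_iff] using h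

/-- Dodgson's condensation formula (Desnanot–Jacobi adjoint matrix theorem) for an
`(n+2) × (n+2)` matrix over a commutative ring.  Here `M.submatrix Fin.succ Fin.succ`
deletes the first row and column, `M.submatrix Fin.castSucc Fin.castSucc` deletes the
last row and column, the mixed submatrices delete first row/last column and vice versa,
and `fun i => i.succ.castSucc` deletes both the first and the last row/column.
(For `n = 0` the central matrix is `0 × 0` and its determinant is `1` by convention.) -/
theorem dodgson_condensation {R : Type*} [CommRing R] (n : ℕ)
    (M : Matrix (Fin (n + 2)) (Fin (n + 2)) R) :
    M.det *
        (M.submatrix (fun i : Fin n => i.succ.castSucc)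
          (fun j : Fin n => j.succ.castSucc)).det
      = (M.submatrix Fin.succ Fin.succ).det * (M.submatrix Fin.castSucc Fin.castSucc).det
        - (M.submatrix Fin.succ Fin.castSucc).det
            * (M.submatrix Fin.castSucc Fin.succ).det := by
  let e : Fin 2 ⊕ Fin n ≃ Fin (n + 2) := Equiv.ofBijective _ (bijective_ends_interior n)
  have h := det_adjugate_block (M.submatrix e e)
  have h₂₂ : (M.submatrix e e).toBlocks₂₂ = M.submatrix (fun i : Fin n => i.succ.castSucc)
      (fun j : Fin n => j.succ.castSucc) := rfl
  have he₀ : e (Sum.inl 0) = 0 := rfl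
  have he₁ : e (Sum.inl 1) = Fin.last (n + 1) := rfl
  rw [Matrix.adjugate_submatrix_equiv_self, Matrix.det_submatrix_equiv_self, h₂₂,
    Matrix.det_fin_two] at h
  simp only [Matrix.toBlocks₁₁, Matrix.of_apply, Matrix.submatrix_apply, he₀, he₁,
    Matrix.adjugate_fin_succ_eq_det_submatrix, Fin.succAbove_last, Fin.succAbove_zero,
    Fin.val_last, Fin.val_zero] at h
  -- The two off-diagonal cofactors carry the same sign `(-1) ^ (n + 1)`.
  have hs : ((-1 : R) ^ (n + 1)) * (-1) ^ (n + 1) = 1 := by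
    rw [← mul_pow]
    simp
  have hd : (-1 : R) ^ (n + 1 + (n + 1)) = 1 := by rw [pow_add, hs]
  rw [hd] at h
  simp only [add_zero, zero_add, pow_zero, one_mul] at h
  rw [← h]
  linear_combination (-(M.submatrix Fin.succ Fin.castSucc).det *
    (M.submatrix Fin.castSucc Fin.succ).det) * hs
end

section
/- Let F be a field, q ∈ F with q ≠ 0, let m ≥ 2 and k ≥ 0 be integers, and let a = (a_1 < a_2 < ... < a_m) be a strictly increasing sequence of integers. Write a' = (a_1, ..., a_{m-1}), ′a = (a_2, ..., a_m), ′a' = (a_2, ..., a_{m-1}), and a − 1 = (a_1 − 1, ..., a_m − 1). Then d(k; a) · d(k+2; ′a' − 1) = q^{1-m} · ( q^{-a_m} · d(k+2; a') · d(k; ′a − 1) − q^{-a_1} · d(k+2; ′a) · d(k; a' − 1) ). -/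
/-- The `n × n` matrix `M(k; b)` with `(i,j)`-entry
`q^{-i b_j} (q^{i - b_j}; q)_{2n+k-2i}` for `1 ≤ i, j ≤ n`
(indices shifted: row `i : Fin n` is the mathematical row `i+1`). -/
def dMat {F : Type*} [Field F] (q : F) (k : ℕ) {n : ℕ} (b : Fin n → ℤ) :
    Matrix (Fin n) (Fin n) F :=
  Matrix.of fun i j =>
    q ^ (-((i : ℤ) + 1) * b j) *
      qPoch (q ^ (((i : ℤ) + 1) - b j)) q (2 * n + k - 2 * ((i : ℕ) + 1))

open Matrix

theorem det_mul_det_adjugate_toBlocks₂₂ {α R : Type*} [Fintype α] [DecidableEq α] [CommRing R]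
    (M : Matrix (α ⊕ Fin 2) (α ⊕ Fin 2) R) :
    M.det * M.adjugate.toBlocks₂₂.det = M.det * (M.det * M.toBlocks₁₁.det) := by
  have hadj : fromBlocks M.toBlocks₁₁ M.toBlocks₁₂ M.toBlocks₂₁ M.toBlocks₂₂ *
      fromBlocks M.adjugate.toBlocks₁₁ M.adjugate.toBlocks₁₂
        M.adjugate.toBlocks₂₁ M.adjugate.toBlocks₂₂ =
      fromBlocks (M.det • 1) 0 0 (M.det • 1) := by
    rw [fromBlocks_toBlocks, fromBlocks_toBlocks, mul_adjugate, ← fromBlocks_one, fromBlocks_smul]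
    simp
  rw [fromBlocks_multiply] at hadj
  obtain ⟨-, h12, -, h22⟩ := fromBlocks_inj.mp hadj
  have hprod : M * fromBlocks 1 M.adjugate.toBlocks₁₂ 0 M.adjugate.toBlocks₂₂ =
      fromBlocks M.toBlocks₁₁ 0 M.toBlocks₂₁ (M.det • 1) := by
    conv_lhs => rw [← fromBlocks_toBlocks M]
    rw [fromBlocks_multiply]
    simp only [fromBlocks_toBlocks, h12, h22]
    simp
  have hdet := congrArg det hprod
  rw [det_mul, det_fromBlocks_zero₂₁, det_fromBlocks_zero₁₂, det_one, one_mul, det_smul,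
    det_one] at hdet
  rw [hdet, Fintype.card_fin]
  ring

/-- Jacobi's complementary minor theorem for `2 × 2` minors of the adjugate. -/
theorem det_adjugate_toBlocks₂₂ {α R : Type*} [Fintype α] [DecidableEq α] [CommRing R]
    (M : Matrix (α ⊕ Fin 2) (α ⊕ Fin 2) R) :
    M.adjugate.toBlocks₂₂.det = M.det * M.toBlocks₁₁.det := by
  -- The determinant of the generic matrix is nonzero, so it cancels; then specialize.
  have hgen := mul_left_cancel₀ (det_mvPolynomialX_ne_zero (α ⊕ Fin 2) ℤ)
    (det_mul_det_adjugate_toBlocks₂₂ (mvPolynomialX (α ⊕ Fin 2) (α ⊕ Fin 2) ℤ))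
  let f : MvPolynomial ((α ⊕ Fin 2) × (α ⊕ Fin 2)) ℤ →+* R :=
    MvPolynomial.eval₂Hom (Int.castRingHom R) fun p => M p.1 p.2
  have hM : f.mapMatrix (mvPolynomialX (α ⊕ Fin 2) (α ⊕ Fin 2) ℤ) = M := by
    ext i j
    simp [f]
  have h := congrArg f hgen
  rw [map_mul, f.map_det, f.map_det, f.map_det, hM] at h
  have h1 : f.mapMatrix (mvPolynomialX (α ⊕ Fin 2) (α ⊕ Fin 2) ℤ).toBlocks₁₁ = M.toBlocks₁₁ :=
    congrArg toBlocks₁₁ hM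
  have h2 : f.mapMatrix (mvPolynomialX (α ⊕ Fin 2) (α ⊕ Fin 2) ℤ).adjugate.toBlocks₂₂ =
      M.adjugate.toBlocks₂₂ := by
    have := congrArg toBlocks₂₂ (f.map_adjugate (mvPolynomialX (α ⊕ Fin 2) (α ⊕ Fin 2) ℤ))
    rw [hM] at this
    exact this
  rw [h1, h2] at h
  exact h

/-- The interior indices on the left; on the right `0` and `1` name the first and last index. -/
noncomputable def interiorEquiv (m : ℕ) : Fin m ⊕ Fin 2 ≃ Fin (m + 2) :=
  Equiv.ofBijective
    (Sum.elim (fun i => i.succ.castSucc) fun t => if t = 0 then 0 else Fin.last (m + 1)) <| by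
    rw [Fintype.bijective_iff_injective_and_card]
    refine ⟨?_, by simp⟩
    rintro (i | s) (j | t) h <;> replace h := congrArg Fin.val h <;>
      simp only [Sum.elim_inl, Sum.elim_inr, apply_ite Fin.val, Fin.val_castSucc, Fin.val_succ,
        Fin.val_zero, Fin.val_last] at h
    · exact congrArg Sum.inl (Fin.ext (by omega))
    · split_ifs at h <;> omega
    · split_ifs at h <;> omega
    · refine congrArg Sum.inr ?_
      split_ifs at h <;> omega

/-- The Desnanot–Jacobi identity (Dodgson condensation). -/
theorem det_mul_det_interior {R : Type*} [CommRing R] {m : ℕ}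
    (M : Matrix (Fin (m + 2)) (Fin (m + 2)) R) :
    M.det * (M.submatrix (fun i : Fin m => i.succ.castSucc) fun i => i.succ.castSucc).det =
      (M.submatrix Fin.castSucc Fin.castSucc).det * (M.submatrix Fin.succ Fin.succ).det -
        (M.submatrix Fin.castSucc Fin.succ).det * (M.submatrix Fin.succ Fin.castSucc).det := by
  have h := det_adjugate_toBlocks₂₂ (M.submatrix (interiorEquiv m) (interiorEquiv m))
  rw [det_submatrix_equiv_self, adjugate_submatrix_equiv_self, det_fin_two] at h
  have e0 : interiorEquiv m (Sum.inr 0) = 0 := rfl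
  have e1 : interiorEquiv m (Sum.inr 1) = Fin.last (m + 1) := rfl
  have e2 : (M.submatrix (interiorEquiv m) (interiorEquiv m)).toBlocks₁₁ =
      M.submatrix (fun i : Fin m => i.succ.castSucc) fun i => i.succ.castSucc := rfl
  rw [e2] at h
  simp only [toBlocks₂₂, of_apply, submatrix_apply, e0, e1] at h
  have hs : ((-1 : R) ^ (m + 1)) * (-1) ^ (m + 1) = 1 := by
    rw [← mul_pow]
    simp
  have s0 : (0 : Fin (m + 2)).succAbove = Fin.succ := by
    ext i
    simp
  have s1 : (Fin.last (m + 1)).succAbove = Fin.castSucc := by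
    ext i
    simp
  rw [adjugate_fin_succ_eq_det_submatrix, adjugate_fin_succ_eq_det_submatrix,
    adjugate_fin_succ_eq_det_submatrix, adjugate_fin_succ_eq_det_submatrix, s0, s1] at h
  simp only [Fin.val_zero, Fin.val_last, add_zero, zero_add, pow_zero, one_mul,
    pow_add _ (m + 1) (m + 1), hs] at h
  rw [← h]
  linear_combination -(M.submatrix Fin.castSucc Fin.succ).det *
    (M.submatrix Fin.succ Fin.castSucc).det * hs

section Minors

variable {F : Type*} [Field F] (q : F)

theorem dMat_submatrix_castSucc (k : ℕ) {n : ℕ} (a : Fin (n + 1) → ℤ) (c : Fin n → Fin (n + 1)) :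
    (dMat q k a).submatrix Fin.castSucc c = dMat q (k + 2) fun j => a (c j) := by
  ext i j
  simp only [dMat, submatrix_apply, of_apply, Fin.val_castSucc]
  congr 2
  omega

/-- The product of the row scalars `q ^ (-i)`, `1 ≤ i ≤ n`, picked up when the first row of a `dMat`
is deleted and `n` rows remain. -/
def rowShiftFactor (n : ℕ) : F := ∏ i : Fin n, q ^ (-((i : ℤ) + 1))

theorem dMat_row_shift {q : F} (hq : q ≠ 0) (x b : ℤ) (N : ℕ) :
    q ^ (-(x + 1) * b) * qPoch (q ^ (x + 1 - b)) q N =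
      q ^ (-x) * (q ^ (-b) * (q ^ (-x * (b - 1)) * qPoch (q ^ (x - (b - 1))) q N)) := by
  rw [← mul_assoc, ← mul_assoc, ← zpow_add₀ hq, ← zpow_add₀ hq]
  congr 3 <;> ring

/-- Determinant of a matrix obtained from `dMat q l (b - 1)` by scaling rows and columns. -/
theorem det_scaled_dMat (l : ℕ) {n : ℕ} (b : Fin n → ℤ) (A : Matrix (Fin n) (Fin n) F)
    (hA : ∀ i j, A i j =
      q ^ (-((i : ℤ) + 1)) * (q ^ (-b j) * dMat q l (fun j => b j - 1) i j)) :
    A.det = rowShiftFactor q n * (∏ j, q ^ (-b j)) * (dMat q l fun j => b j - 1).det := by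
  have : A = of fun (i j : Fin n) => q ^ (-((i : ℤ) + 1)) *
      (of fun (i j : Fin n) => q ^ (-b j) * dMat q l (fun j => b j - 1) i j) i j := by
    ext i j
    exact hA i j
  rw [this, det_mul_column, det_mul_row, rowShiftFactor, mul_assoc]

theorem det_dMat_submatrix_succ {q : F} (hq : q ≠ 0) (k : ℕ) {n : ℕ} (a : Fin (n + 1) → ℤ)
    (c : Fin n → Fin (n + 1)) :
    ((dMat q k a).submatrix Fin.succ c).det =
      rowShiftFactor q n * (∏ j, q ^ (-a (c j))) * (dMat q k fun j => a (c j) - 1).det := by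
  refine det_scaled_dMat q k (fun j => a (c j)) _ fun i j => ?_
  simp only [dMat, submatrix_apply, of_apply, Fin.val_succ]
  rw [← dMat_row_shift hq]
  push_cast
  congr 2
  omega

theorem det_dMat_submatrix_interior {q : F} (hq : q ≠ 0) (k : ℕ) {m : ℕ} (a : Fin (m + 2) → ℤ) :
    ((dMat q k a).submatrix (fun i : Fin m => i.succ.castSucc) fun i => i.succ.castSucc).det =
      rowShiftFactor q m * (∏ j : Fin m, q ^ (-a j.succ.castSucc)) *
        (dMat q (k + 2) fun j : Fin m => a j.succ.castSucc - 1).det := by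
  refine det_scaled_dMat q (k + 2) (fun j : Fin m => a j.succ.castSucc) _ fun i j => ?_
  simp only [dMat, submatrix_apply, of_apply, Fin.val_succ, Fin.val_castSucc]
  rw [← dMat_row_shift hq]
  push_cast
  congr 2
  omega

end Minors

/-- The Dodgson-condensation recursion for `d(k; a) = det M(k; a)`
(equation (8) of the paper), for a strictly increasing sequence `a` of
length `m + 2` (i.e. of length at least 2):
`d(k; a) · d(k+2; ′a′ − 1) = q^{1-(m+2)} ( q^{-a_{m+2}} d(k+2; a′) d(k; ′a − 1)
  − q^{-a_1} d(k+2; ′a) d(k; a′ − 1) )`,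
where `a′` drops the last entry, `′a` drops the first entry, `′a′` drops both, and
`b − 1` subtracts 1 from every entry. -/
theorem dDet_recursion {F : Type*} [Field F] (q : F) (hq : q ≠ 0)
    (m k : ℕ) (a : Fin (m + 2) → ℤ) (ha : StrictMono a) :
    (dMat q k a).det * (dMat q (k + 2) (fun i : Fin m => a i.succ.castSucc - 1)).det
      = q ^ (1 - ((m : ℤ) + 2)) *
          (q ^ (-a (Fin.last (m + 1)))
              * (dMat q (k + 2) (fun i : Fin (m + 1) => a i.castSucc)).det
              * (dMat q k (fun i : Fin (m + 1) => a i.succ - 1)).det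
            - q ^ (-a 0)
                * (dMat q (k + 2) (fun i : Fin (m + 1) => a i.succ)).det
                * (dMat q k (fun i : Fin (m + 1) => a i.castSucc - 1)).det) := by
  have h := det_mul_det_interior (dMat q k a)
  rw [det_dMat_submatrix_interior hq, dMat_submatrix_castSucc, dMat_submatrix_castSucc,
    det_dMat_submatrix_succ hq, det_dMat_submatrix_succ hq] at h
  have hrow : rowShiftFactor q (m + 1) = rowShiftFactor q m * q ^ (1 - ((m : ℤ) + 2)) := by
    rw [rowShiftFactor, Fin.prod_univ_castSucc, rowShiftFactor]
    simp only [Fin.val_castSucc, Fin.val_last]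
    rw [show 1 - ((m : ℤ) + 2) = -((m : ℤ) + 1) by ring]
  have hlast : ∏ j : Fin (m + 1), q ^ (-a j.succ) =
      (∏ j : Fin m, q ^ (-a j.succ.castSucc)) * q ^ (-a (Fin.last (m + 1))) := by
    rw [Fin.prod_univ_castSucc]
    rfl
  have hfirst : ∏ j : Fin (m + 1), q ^ (-a j.castSucc) =
      q ^ (-a 0) * ∏ j : Fin m, q ^ (-a j.succ.castSucc) := by
    rw [Fin.prod_univ_succ]
    rfl
  rw [hrow, hlast, hfirst] at h
  have hne : rowShiftFactor q m * ∏ j : Fin m, q ^ (-a j.succ.castSucc) ≠ 0 :=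
    mul_ne_zero (Finset.prod_ne_zero_iff.mpr fun i _ => zpow_ne_zero _ hq)
      (Finset.prod_ne_zero_iff.mpr fun i _ => zpow_ne_zero _ hq)
  apply mul_left_cancel₀ hne
  linear_combination h
end

section
/- Let F be a field, q ∈ F with q ≠ 0, let m ≥ 1 and k ≥ 0 be integers, and let X_1, ..., X_m be nonzero elements of F. Then det_{1 ≤ i,j ≤ m} ( X_j^i · (q^i X_j; q)_{m-i} · (q^{m+k} X_j; q)_{m-i} ) = q^{m(m-1)(2m+k-1)/2} · (∏_{l=1}^m X_l^m) · ∏_{1 ≤ i < j ≤ m} (X_i − X_j)(1 − q^{1-2m-k}/(X_i X_j)). -/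
open Finset Polynomial

/-- The monic polynomial of degree `d` whose value at `Y = x⁻¹ + q^(2m+k-1) x` is, up to a power of
`x`, the product of the two q-Pochhammer symbols of length `d`. -/
noncomputable def rowPoly {F : Type*} [Field F] (q : F) (m k d : ℕ) : F[X] :=
  ∏ t ∈ range d, (X - C (q ^ (m - d + t) + q ^ (m + k + (d - 1 - t))))

lemma rowPoly_monic {F : Type*} [Field F] (q : F) (m k d : ℕ) : (rowPoly q m k d).Monic :=
  monic_prod_of_monic _ _ fun _ _ => monic_X_sub_C _

lemma rowPoly_natDegree {F : Type*} [Field F] (q : F) (m k d : ℕ) :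
    (rowPoly q m k d).natDegree = d := by
  rw [rowPoly, natDegree_prod_of_monic _ _ fun _ _ => monic_X_sub_C _]
  simp only [natDegree_X_sub_C, sum_const, card_range, smul_eq_mul, mul_one]

lemma qPoch_mul_qPoch {F : Type*} [Field F] (q : F) (m k d : ℕ) (hd : d < m) (x : F) (hx : x ≠ 0) :
    x ^ (m - d) * qPoch (q ^ (m - d) * x) q d * qPoch (q ^ (m + k) * x) q d
      = x ^ m * (rowPoly q m k d).eval (x⁻¹ + q ^ (2 * m + k - 1) * x) := by
  have hm : x ^ m = x ^ (m - d) * ∏ _t ∈ range d, x := by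
    rw [prod_const, card_range, ← pow_add]
    congr 1
    omega
  rw [hm, mul_assoc, mul_assoc]
  congr 1
  -- Reversing the second product pairs the exponents `l` and `2m + k - 1 - l`.
  rw [qPoch, qPoch, ← prod_range_reflect (fun l => 1 - q ^ (m + k) * x * q ^ l) d, rowPoly,
    eval_prod, ← prod_mul_distrib, ← prod_mul_distrib]
  refine prod_congr rfl fun t ht => ?_
  have ht := mem_range.mp ht
  have hN : q ^ (2 * m + k - 1) = q ^ (m - d) * q ^ t * (q ^ (m + k) * q ^ (d - 1 - t)) := by
    simp only [← pow_add]
    congr 1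
    omega
  simp only [eval_sub, eval_X, eval_C, hN, pow_add q (m - d) t, pow_add q (m + k) (d - 1 - t)]
  field_simp
  ring

/-- Reversing the index set turns a product over pairs `i < j` into the one with roles swapped. -/
lemma prod_Ioi_rev {F : Type*} [Field F] {m : ℕ} (f : Fin m → Fin m → F) :
    ∏ i : Fin m, ∏ j ∈ Ioi i, f j.rev i.rev = ∏ i : Fin m, ∏ j ∈ Ioi i, f i j := by
  have h (g : Fin m → Fin m → F) :
      ∏ i : Fin m, ∏ j ∈ Ioi i, g i j = ∏ i, ∏ j, if i < j then g i j else 1 := by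
    refine prod_congr rfl fun i _ => ?_
    rw [← prod_filter]
    congr 1
    ext j
    simp
  rw [h, h, prod_comm, ← Equiv.prod_comp Fin.revPerm]
  refine prod_congr rfl fun i _ => ?_
  rw [← Equiv.prod_comp Fin.revPerm]
  simp

/-- The determinant evaluation
`det_{1≤i,j≤m} ( X_j^i (q^i X_j; q)_{m-i} (q^{m+k} X_j; q)_{m-i} )
  = q^{m(m-1)(2m+k-1)/2} (∏_l X_l^m) ∏_{i<j} (X_i − X_j)(1 − q^{1-2m-k}/(X_i X_j))`
(indices shifted: `i : Fin m` is the mathematical index `i + 1`). -/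
theorem det_X_qPoch {F : Type*} [Field F] (q : F) (hq : q ≠ 0)
    (m k : ℕ) (hm : 1 ≤ m) (X : Fin m → F) (hX : ∀ i, X i ≠ 0) :
    Matrix.det (Matrix.of fun i j : Fin m =>
        X j ^ ((i : ℕ) + 1)
          * qPoch (q ^ ((i : ℕ) + 1) * X j) q (m - ((i : ℕ) + 1))
          * qPoch (q ^ (m + k) * X j) q (m - ((i : ℕ) + 1)))
      = q ^ (m * (m - 1) * (2 * m + k - 1) / 2)
        * (∏ l : Fin m, X l ^ m)
        * ∏ i : Fin m, ∏ j ∈ Finset.Ioi i,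
            (X i - X j) * (1 - q ^ (1 - 2 * (m : ℤ) - k) / (X i * X j)) := by
  set Y : Fin m → F := fun j => (X j)⁻¹ + q ^ (2 * m + k - 1) * X j with hY
  have hV : Matrix.det (Matrix.of fun i j : Fin m =>
      (rowPoly q m k (m - ((i : ℕ) + 1))).eval (Y j)) = ∏ i, ∏ j ∈ Ioi i, (Y i - Y j) := by
    rw [← prod_Ioi_rev fun i j => Y i - Y j, ← Matrix.det_vandermonde fun j : Fin m => Y j.rev,
      Matrix.det_eval_matrixOfPolynomials_eq_det_vandermonde _ (fun i => rowPoly q m k i)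
        (fun i => rowPoly_natDegree q m k i) (fun i => rowPoly_monic q m k i),
      ← Matrix.det_transpose, ← Matrix.det_submatrix_equiv_self Fin.revPerm]
    congr 1
    ext i j
    have : m - (m - ((j : ℕ) + 1) + 1) = j := by omega
    simp [this]
  have hdet : Matrix.det (Matrix.of fun i j : Fin m =>
      X j ^ ((i : ℕ) + 1)
        * qPoch (q ^ ((i : ℕ) + 1) * X j) q (m - ((i : ℕ) + 1))
        * qPoch (q ^ (m + k) * X j) q (m - ((i : ℕ) + 1)))
      = (∏ l, X l ^ m) * ∏ i, ∏ j ∈ Ioi i, (Y i - Y j) := by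
    rw [← hV, ← Matrix.det_mul_row]
    congr 1
    ext i j
    have hi : m - (m - ((i : ℕ) + 1)) = (i : ℕ) + 1 := by omega
    have := qPoch_mul_qPoch q m k (m - ((i : ℕ) + 1)) (by omega) (X j) (hX j)
    rw [hi] at this
    simpa using this
  have hdiff (i j : Fin m) : Y i - Y j = q ^ (2 * m + k - 1)
      * ((X i - X j) * (1 - q ^ (1 - 2 * (m : ℤ) - k) / (X i * X j))) := by
    have hz : q ^ (1 - 2 * (m : ℤ) - k) = (q ^ (2 * m + k - 1))⁻¹ := by
      rw [← zpow_natCast, ← zpow_neg]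
      congr 1
      omega
    have hi := hX i
    have hj := hX j
    have hN : q ^ (2 * m + k - 1) ≠ 0 := pow_ne_zero _ hq
    rw [hz, hY]
    generalize q ^ (2 * m + k - 1) = Q at hN
    field_simp
    ring
  -- There are `m(m-1)/2` pairs `i < j`, each contributing a factor `q^(2m+k-1)`.
  have hpow : ∏ i : Fin m, ∏ _j ∈ Ioi i, q ^ (2 * m + k - 1)
      = q ^ (m * (m - 1) * (2 * m + k - 1) / 2) := by
    simp only [prod_const, ← pow_mul, prod_pow_eq_pow_sum, Fin.card_Ioi]
    congr 1
    rw [← mul_sum, Fin.sum_univ_eq_sum_range (fun i => m - 1 - i),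
      sum_range_reflect (fun i => i) m, sum_range_id, mul_comm (m * (m - 1)),
      Nat.mul_div_assoc _ (even_iff_two_dvd.mp (Nat.even_mul_pred_self m))]
  rw [hdet, ← hpow]
  simp only [hdiff, prod_mul_distrib]
  ring
end
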